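/- Let α ≥ 2 be real, let n ≥ 2 be a natural number, and let x satisfy −1 < x < −(α+1)/(α+3). Then P̃_n^{(α,0)}(x) > P̃₁^{(α,0)}(x). -/

import Mathlib

open Finset

/-- The generalized binomial coefficient `binom(a, k) = a(a-1)⋯(a-k+1)/k!` for real `a`. -/
noncomputable def genBinom (a : ℝ) (k : ℕ) : ℝ :=
  (∏ i ∈ Finset.range k, (a - i)) / (Nat.factorial k)

/-- The Jacobi polynomial
`P_n^{(α,β)}(x) = Σ_{s=0}^n binom(n+α, n-s)·binom(n+β, s)·((x-1)/2)^s·((x+1)/2)^{n-s}`. -/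
noncomputable def jacobiP (n : ℕ) (α β x : ℝ) : ℝ :=
  ∑ s ∈ Finset.range (n + 1),
    genBinom (n + α) (n - s) * genBinom (n + β) s * ((x - 1) / 2) ^ s * ((x + 1) / 2) ^ (n - s)

/-- The normalized Jacobi polynomial `P̃_n^{(α,β)}(x) = P_n^{(α,β)}(x) / P_n^{(α,β)}(1)`. -/
noncomputable def jacobiPt (n : ℕ) (α β x : ℝ) : ℝ :=
  jacobiP n α β x / jacobiP n α β 1

/-!
Write `x = 2t - 1`, so that `0 < t < 1/(α+3)`, and `B = P_n(1) = binom(n+α, n)`. The claim is that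
`P_n(x) + B (1 - (α+2)t)/(α+1)` is positive, and here `1 - (α+2)t > 1/(α+3)`.

For large `n` the second summand wins because `B` grows with `n` while `P_n` stays bounded near
`x = -1`: by the Jacobi differential equation, Sonin's energy `P_n² + t(1-t)P_n'²/(n(n+α+1))`
times a suitable linear weight decreases on `[0, 1/(α+3)]`, and it equals `1` at `t = 0`. With
`B` replaced by its value at degree `5` this settles `n ≥ 5`. For `n = 2, 3, 4` the difference is
`1 - t` times a form in `t` and `w = 1 - (α+3)t` with positive coefficients.
-/

open Polynomial Set

section GenBinom

lemma genBinom_zero (a : ℝ) : genBinom a 0 = 1 := by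
  simp [genBinom]

lemma genBinom_succ_mul (a : ℝ) (k : ℕ) :
    genBinom a (k + 1) * (k + 1) = genBinom a k * (a - k) := by
  rw [genBinom, genBinom, prod_range_succ, Nat.factorial_succ]
  push_cast
  field_simp

lemma genBinom_natCast (n k : ℕ) : genBinom n k = n.choose k := by
  rw [Nat.cast_choose_eq_descPochhammer_div, descPochhammer_eval_eq_prod_range, genBinom]

lemma genBinom_succ_add_succ_mul (α : ℝ) (n : ℕ) :
    genBinom ((n + 1 : ℕ) + α) (n + 1) * (n + 1) = genBinom (n + α) n * (n + 1 + α) := by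
  rw [genBinom, genBinom, prod_range_succ', Nat.factorial_succ]
  have shift (i : ℕ) : ((n + 1 : ℕ) : ℝ) + α - (i + 1 : ℕ) = n + α - i := by
    push_cast
    ring
  simp only [shift]
  push_cast
  field_simp
  ring

lemma genBinom_natCast_add_pos {α : ℝ} (hα : -1 < α) (n : ℕ) : 0 < genBinom (n + α) n := by
  refine div_pos (prod_pos fun i hi ↦ ?_) (by positivity)
  have : (i : ℝ) + 1 ≤ n := by exact_mod_cast mem_range.mp hi
  linarith

lemma monotone_genBinom_natCast_add {α : ℝ} (hα : 0 ≤ α) :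
    Monotone fun n : ℕ ↦ genBinom (n + α) n := by
  refine monotone_nat_of_le_succ fun n ↦ ?_
  have hn : (0 : ℝ) < n + 1 := by positivity
  refine le_of_mul_le_mul_right ?_ hn
  rw [genBinom_succ_add_succ_mul]
  exact mul_le_mul_of_nonneg_left (by linarith) (genBinom_natCast_add_pos (by linarith) n).le

end GenBinom

section SpecialValues

lemma jacobiP_one (n : ℕ) (α β : ℝ) : jacobiP n α β 1 = genBinom (n + α) n := by
  rw [jacobiP, sum_eq_single 0]
  · simp [genBinom_zero]
  · intro s _ hs
    simp [hs]
  · simp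

lemma jacobiP_neg_one (n : ℕ) (α β : ℝ) :
    jacobiP n α β (-1) = (-1) ^ n * genBinom (n + β) n := by
  rw [jacobiP, sum_eq_single n]
  · norm_num [genBinom_zero, mul_comm]
  · intro s hs hsn
    have : n - s ≠ 0 := by grind
    simp [this]
  · simp

lemma jacobiPt_one_lt_jacobiPt_iff {α : ℝ} (hα : -1 < α) (β : ℝ) (n : ℕ) (t : ℝ) :
    jacobiPt 1 α β (2 * t - 1) < jacobiPt n α β (2 * t - 1) ↔
      0 < (α + 1) * jacobiP n α β (2 * t - 1) +
        genBinom (n + α) n * (β + 1 - (α + β + 2) * t) := by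
  have degree_one : jacobiP 1 α β (2 * t - 1) = (α + β + 2) * t - (β + 1) := by
    simp only [jacobiP, genBinom, sum_range_succ, prod_range_succ, sum_range_zero, prod_range_zero,
      Nat.reduceAdd, Nat.reduceSub, Nat.factorial]
    push_cast
    ring
  have leading : genBinom ((1 : ℕ) + α) 1 = α + 1 := by
    simp [genBinom, add_comm]
  rw [jacobiPt, jacobiPt, jacobiP_one, jacobiP_one, degree_one, leading,
    div_lt_div_iff₀ (by linarith) (genBinom_natCast_add_pos hα n), ← sub_pos]
  ring_nf

end SpecialValues

section DifferentialEquation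

/-- The coefficient of `((x-1)/2)^s ((x+1)/2)^{n-s}` in `P_n^{(α,β)}(x)`. -/
noncomputable def jacobiCoeff (n : ℕ) (α β : ℝ) (s : ℕ) : ℝ :=
  genBinom (n + α) (n - s) * genBinom (n + β) s

/-- The Jacobi polynomial as a formal polynomial in the variable `t = (x+1)/2`, which places the
endpoints `x = -1` and `x = 1` at `t = 0` and `t = 1`. -/
noncomputable def jacobiPoly (n : ℕ) (α β : ℝ) : ℝ[X] :=
  ∑ s ∈ range (n + 1), jacobiCoeff n α β s • (X ^ (n - s) * (X - 1) ^ s)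

/-- The Jacobi differential operator `p ↦ t(1-t)p'' + (β+1-(α+β+2)t)p'` in the variable
`t = (x+1)/2`. -/
noncomputable def jacobiOp (α β : ℝ) : ℝ[X] →ₗ[ℝ] ℝ[X] :=
  LinearMap.mulLeft ℝ (X * (1 - X)) ∘ₗ derivative ∘ₗ derivative +
    LinearMap.mulLeft ℝ (C (β + 1) - C (α + β + 2) * X) ∘ₗ derivative

lemma jacobiOp_apply (α β : ℝ) (p : ℝ[X]) :
    jacobiOp α β p = X * (1 - X) * derivative (derivative p) +
      (C (β + 1) - C (α + β + 2) * X) * derivative p :=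
  rfl

lemma eval_jacobiPoly (n : ℕ) (α β t : ℝ) :
    (jacobiPoly n α β).eval t = jacobiP n α β (2 * t - 1) := by
  have left : (2 * t - 1 - 1) / 2 = t - 1 := by ring
  have right : (2 * t - 1 + 1) / 2 = t := by ring
  simp only [jacobiPoly, jacobiCoeff, jacobiP, eval_finsetSum, eval_smul, eval_mul, eval_pow,
    eval_sub, eval_X, eval_one, smul_eq_mul, left, right]
  exact sum_congr rfl fun s _ ↦ by ring

lemma jacobiCoeff_succ_mul {n s : ℕ} (hs : s < n) (α β : ℝ) :
    jacobiCoeff n α β (s + 1) * ((s + 1) * (s + 1 + α)) =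
      jacobiCoeff n α β s * ((n - s) * (n - s + β)) := by
  obtain ⟨k, rfl⟩ : ∃ k, n = s + k + 1 := ⟨n - s - 1, by omega⟩
  have lower : s + k + 1 - (s + 1) = k := by omega
  have upper : s + k + 1 - s = k + 1 := by omega
  have left := genBinom_succ_mul ((s + k + 1 : ℕ) + α) k
  have right := genBinom_succ_mul ((s + k + 1 : ℕ) + β) s
  rw [jacobiCoeff, jacobiCoeff, lower, upper]
  push_cast at left right ⊢
  linear_combination
    genBinom (s + k + 1 + α) k * (s + 1 + α) * right -
      genBinom (s + k + 1 + β) s * (k + 1 + β) * left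

lemma mul_derivative_pow_self {R : Type*} [CommSemiring R] (p : R[X]) (k : ℕ) :
    p * derivative (p ^ k) = k * derivative p * p ^ k := by
  cases k with
  | zero => simp
  | succ k =>
    rw [derivative_pow_succ, map_add, map_natCast, map_one]
    push_cast
    ring

lemma jacobiOp_X_pow_mul_X_sub_one_pow (α β : ℝ) (m s : ℕ) :
    jacobiOp α β (X ^ m * (X - 1) ^ s) =
      (m * (m + β)) • (X ^ (m - 1) * (X - 1) ^ s) - (s * (s + α)) • (X ^ m * (X - 1) ^ (s - 1)) -
        ((m + s) * (m + s + α + β + 1)) • (X ^ m * (X - 1) ^ s) := by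
  have hX : derivative (X - 1 : ℝ[X]) = 1 := by
    rw [derivative_sub, derivative_X, derivative_one, sub_zero]
  have hA : (X : ℝ[X]) * derivative (X ^ m) = (m : ℝ[X]) * X ^ m := by
    rw [mul_derivative_pow_self, derivative_X, mul_one]
  have hB : (X - 1 : ℝ[X]) * derivative ((X - 1) ^ s) = (s : ℝ[X]) * (X - 1) ^ s := by
    rw [mul_derivative_pow_self, hX, mul_one]
  have hA' := congrArg derivative hA
  have hB' := congrArg derivative hB
  have hAm : derivative (X ^ m : ℝ[X]) = (m : ℝ[X]) * X ^ (m - 1) := by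
    rw [derivative_X_pow, C_eq_natCast]
  have hBs : derivative ((X - 1) ^ s : ℝ[X]) = (s : ℝ[X]) * (X - 1) ^ (s - 1) := by
    rw [derivative_pow, hX, mul_one, C_eq_natCast]
  simp only [derivative_mul, derivative_sub, derivative_X, derivative_one,
    derivative_natCast] at hA' hB'
  simp only [jacobiOp_apply, derivative_mul, smul_eq_C_mul, map_add, map_mul, map_natCast,
    map_one, C_ofNat]
  linear_combination (1 - X) * (X - 1) ^ s * hA' - X * X ^ m * hB' -
    2 * (X - 1) * derivative ((X - 1) ^ s) * hA - 2 * m * X ^ m * hB -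
    (m + C α + C β + 1) * (X - 1) ^ s * hA - (s + C α + C β + 1) * X ^ m * hB +
    (m + C β) * (X - 1) ^ s * hAm - (s + C α) * X ^ m * hBs

lemma jacobiOp_jacobiPoly (n : ℕ) (α β : ℝ) :
    jacobiOp α β (jacobiPoly n α β) = -(n * (n + α + β + 1)) • jacobiPoly n α β := by
  let g (s : ℕ) : ℝ[X] :=
    (jacobiCoeff n α β s * (s * (s + α))) • (X ^ (n - s) * (X - 1) ^ (s - 1))
  let h (s : ℕ) : ℝ[X] := (jacobiCoeff n α β s * ((n - s) * (n - s + β))) •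
    (X ^ (n - s - 1) * (X - 1) ^ s)
  have hterm : ∀ s ∈ range (n + 1),
      jacobiCoeff n α β s • jacobiOp α β (X ^ (n - s) * (X - 1) ^ s) =
        h s - g s - (n * (n + α + β + 1)) • jacobiCoeff n α β s • (X ^ (n - s) * (X - 1) ^ s) := by
    intro s hs
    rw [jacobiOp_X_pow_mul_X_sub_one_pow, Nat.cast_sub (mem_range_succ_iff.mp hs)]
    simp only [smul_sub, smul_smul, h, g]
    congr 2
    ring
  have hshift : ∀ s ∈ range n, h s = g (s + 1) := by
    intro s hs
    have hexp : n - s - 1 = n - (s + 1) := by omega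
    simp only [h, g, ← jacobiCoeff_succ_mul (mem_range.mp hs), hexp]
    simp
  have htelescope : ∑ s ∈ range (n + 1), h s = ∑ s ∈ range (n + 1), g s := by
    rw [sum_range_succ, sum_range_succ', sum_congr rfl hshift]
    simp [h, g]
  simp only [jacobiPoly, map_sum, map_smul]
  rw [sum_congr rfl hterm, sum_sub_distrib, sum_sub_distrib, htelescope, sub_self, zero_sub,
    neg_smul, smul_sum]

end DifferentialEquation

section Sonin

/-- Sonin's energy `f² + t(1-t)f'²/l` of a solution `f` of
`t(1-t)f'' + (β+1-(α+β+2)t)f' + l f = 0`. The derivative `f'` is a separate argument. -/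
noncomputable def soninEnergy (l : ℝ) (f f' : ℝ → ℝ) (t : ℝ) : ℝ :=
  f t ^ 2 + t * (1 - t) * f' t ^ 2 / l

lemma hasDerivAt_soninEnergy {α β l : ℝ} (hl : l ≠ 0) {f f' : ℝ → ℝ} {f'' t : ℝ}
    (hf : HasDerivAt f (f' t) t) (hf' : HasDerivAt f' f'' t)
    (ode : t * (1 - t) * f'' + (β + 1 - (α + β + 2) * t) * f' t + l * f t = 0) :
    HasDerivAt (soninEnergy l f f')
      ((2 * (α + β + 1) * t - (2 * β + 1)) * f' t ^ 2 / l) t := by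
  have hquad : HasDerivAt (fun u : ℝ ↦ u * (1 - u)) (1 - 2 * t) t :=
    ((hasDerivAt_id' t).mul ((hasDerivAt_id' t).const_sub 1)).congr_deriv (by ring)
  refine ((hf.pow 2).add ((hquad.mul (hf'.pow 2)).div_const l)).congr_deriv ?_
  simp only [Pi.pow_apply]
  field_simp
  push_cast
  linear_combination 2 * f' t * ode

/-- The linear weight that makes Sonin's energy for `β = 0` decrease up to `t = 1/(α+3)`. Its slope
is chosen so that the coefficient of `f'²/l` in the derivative of the weighted energy factors as
`-(1 - (α-1)t)(1 - (α+3)t)`. -/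
noncomputable def soninWeight (α t : ℝ) : ℝ :=
  1 - (α - 1) * (α + 3) / (2 * α + 1) * t

lemma le_soninWeight {α t : ℝ} (hα : 1 ≤ α) (ht : (α + 3) * t ≤ 1) :
    (α + 2) / (2 * α + 1) ≤ soninWeight α t := by
  have hα' : 0 < 2 * α + 1 := by linarith
  have hdiff : soninWeight α t - (α + 2) / (2 * α + 1) =
      (α - 1) * (1 - (α + 3) * t) / (2 * α + 1) := by
    rw [soninWeight]
    field_simp
    ring
  rw [← sub_nonneg, hdiff]
  exact div_nonneg (mul_nonneg (by linarith) (by linarith)) hα'.le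

lemma antitoneOn_soninWeight_mul_soninEnergy {α l : ℝ} (hα : 1 ≤ α) (hl : 0 < l)
    {f f' f'' : ℝ → ℝ} (hf : ∀ t ∈ Icc 0 (1 / (α + 3)), HasDerivAt f (f' t) t)
    (hf' : ∀ t ∈ Icc 0 (1 / (α + 3)), HasDerivAt f' (f'' t) t)
    (ode : ∀ t ∈ Icc 0 (1 / (α + 3)),
      t * (1 - t) * f'' t + (1 - (α + 2) * t) * f' t + l * f t = 0) :
    AntitoneOn (fun t ↦ soninWeight α t * soninEnergy l f f' t) (Icc 0 (1 / (α + 3))) := by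
  set μ := (α - 1) * (α + 3) / (2 * α + 1) with hμ
  have hμ0 : 0 ≤ μ := div_nonneg (mul_nonneg (by linarith) (by linarith)) (by linarith)
  have hμα : μ * (2 * α + 1) = (α - 1) * (α + 3) := div_mul_cancel₀ _ (by linarith)
  have hderiv : ∀ t ∈ Icc 0 (1 / (α + 3)),
      HasDerivAt (fun t ↦ soninWeight α t * soninEnergy l f f' t)
        (-(μ * f t ^ 2 + (1 - (α - 1) * t) * (1 - (α + 3) * t) * (f' t ^ 2 / l))) t := by
    intro t ht
    have hweight : HasDerivAt (soninWeight α) (-μ) t :=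
      (((hasDerivAt_id' t).const_mul μ).const_sub 1).congr_deriv (by ring)
    have henergy := hasDerivAt_soninEnergy (α := α) (β := 0) hl.ne' (hf t ht) (hf' t ht)
      (by linear_combination ode t ht)
    refine (hweight.mul henergy).congr_deriv ?_
    rw [soninWeight, soninEnergy, ← hμ]
    linear_combination -(t ^ 2 * (f' t ^ 2 / l)) * hμα
  refine antitoneOn_of_hasDerivWithinAt_nonpos (convex_Icc _ _)
    (fun t ht ↦ (hderiv t ht).continuousAt.continuousWithinAt)
    (fun t ht ↦ (hderiv t (interior_subset ht)).hasDerivWithinAt) fun t ht ↦ ?_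
  obtain ⟨ht0, ht1⟩ := interior_subset ht
  rw [le_div_iff₀ (by linarith)] at ht1
  have hleft : 0 ≤ 1 - (α - 1) * t := by linarith
  have hright : 0 ≤ 1 - (α + 3) * t := by linarith
  exact neg_nonpos.mpr (add_nonneg (mul_nonneg hμ0 (sq_nonneg _)) (by positivity))

lemma mul_sq_le_sq_zero_of_ode {α l : ℝ} (hα : 1 ≤ α) (hl : 0 < l)
    {f f' f'' : ℝ → ℝ} (hf : ∀ t ∈ Icc 0 (1 / (α + 3)), HasDerivAt f (f' t) t)
    (hf' : ∀ t ∈ Icc 0 (1 / (α + 3)), HasDerivAt f' (f'' t) t)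
    (ode : ∀ t ∈ Icc 0 (1 / (α + 3)),
      t * (1 - t) * f'' t + (1 - (α + 2) * t) * f' t + l * f t = 0)
    {t : ℝ} (ht : t ∈ Icc 0 (1 / (α + 3))) :
    (α + 2) / (2 * α + 1) * f t ^ 2 ≤ f 0 ^ 2 := by
  have hα3 : 0 < α + 3 := by linarith
  have hα2 : 0 ≤ (α + 2) / (2 * α + 1) := div_nonneg (by linarith) (by linarith)
  have ht1 : (α + 3) * t ≤ 1 := (le_div_iff₀' hα3).mp ht.2
  have hweight : (α + 2) / (2 * α + 1) ≤ soninWeight α t := le_soninWeight hα ht1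
  have henergy : f t ^ 2 ≤ soninEnergy l f f' t := by
    have : 0 ≤ t * (1 - t) := mul_nonneg ht.1 (by nlinarith [ht.1])
    exact le_add_of_nonneg_right (by positivity)
  calc (α + 2) / (2 * α + 1) * f t ^ 2
      ≤ soninWeight α t * soninEnergy l f f' t :=
        mul_le_mul hweight henergy (sq_nonneg _) (hα2.trans hweight)
    _ ≤ soninWeight α 0 * soninEnergy l f f' 0 :=
        antitoneOn_soninWeight_mul_soninEnergy hα hl hf hf' ode
          (left_mem_Icc.mpr (by positivity)) ht ht.1
    _ = f 0 ^ 2 := by simp [soninWeight, soninEnergy]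

lemma jacobiP_sq_le {n : ℕ} (hn : n ≠ 0) {α t : ℝ} (hα : 1 ≤ α)
    (ht : t ∈ Icc 0 (1 / (α + 3))) :
    (α + 2) / (2 * α + 1) * jacobiP n α 0 (2 * t - 1) ^ 2 ≤ 1 := by
  set p := jacobiPoly n α 0
  have hl : 0 < n * (n + α + 1) := by positivity
  have ode (u : ℝ) : u * (1 - u) * p.derivative.derivative.eval u +
      (1 - (α + 2) * u) * p.derivative.eval u + n * (n + α + 1) * p.eval u = 0 := by
    have h := congrArg (eval u) (jacobiOp_jacobiPoly n α 0)
    simp only [jacobiOp_apply, eval_add, eval_sub, eval_mul, eval_smul, eval_X, eval_one, eval_C,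
      smul_eq_mul] at h
    linear_combination h
  have hzero : p.eval 0 ^ 2 = 1 := by
    have hdiag : genBinom (n + 0) n = 1 := by simp [genBinom_natCast]
    rw [eval_jacobiPoly, mul_zero, zero_sub, jacobiP_neg_one, hdiag, mul_one, ← pow_mul,
      mul_comm, pow_mul]
    norm_num
  calc (α + 2) / (2 * α + 1) * jacobiP n α 0 (2 * t - 1) ^ 2
      = (α + 2) / (2 * α + 1) * p.eval t ^ 2 := by rw [eval_jacobiPoly]
    _ ≤ p.eval 0 ^ 2 :=
        mul_sq_le_sq_zero_of_ode hα hl (fun u _ ↦ p.hasDerivAt u)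
          (fun u _ ↦ p.derivative.hasDerivAt u) (fun u _ ↦ ode u) ht
    _ = 1 := hzero

end Sonin

section DegreeComparison

variable {α t : ℝ}

lemma jacobiPt_one_lt_jacobiPt_two (hα : -1 < α) (ht : (α + 3) * t < 1) :
    jacobiPt 1 α 0 (2 * t - 1) < jacobiPt 2 α 0 (2 * t - 1) := by
  have factorization : (α + 1) * jacobiP 2 α 0 (2 * t - 1) +
      genBinom ((2 : ℕ) + α) 2 * (0 + 1 - (α + 0 + 2) * t) =
        (α + 1) * (1 - t) * ((α + 4) / 2) * (1 - (α + 3) * t) := by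
    simp only [jacobiP, genBinom, sum_range_succ, prod_range_succ, sum_range_zero, prod_range_zero,
      Nat.reduceAdd, Nat.reduceSub, Nat.factorial]
    push_cast
    ring
  have ht1 : 0 < 1 - t := by nlinarith
  have hw : 0 < 1 - (α + 3) * t := by linarith
  have hα1 : 0 < α + 1 := by linarith
  have hα4 : 0 < (α + 4) / 2 := by linarith
  rw [jacobiPt_one_lt_jacobiPt_iff hα, factorization]
  exact mul_pos (mul_pos (mul_pos hα1 ht1) hα4) hw

lemma jacobiPt_one_lt_jacobiPt_three (hα : 0 < α) (ht0 : 0 ≤ t) (ht : (α + 3) * t < 1) :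
    jacobiPt 1 α 0 (2 * t - 1) < jacobiPt 3 α 0 (2 * t - 1) := by
  obtain ⟨w, hw⟩ : ∃ w, w = 1 - (α + 3) * t := ⟨_, rfl⟩
  have factorization : (α + 1) * jacobiP 3 α 0 (2 * t - 1) +
      genBinom ((3 : ℕ) + α) 3 * (0 + 1 - (α + 0 + 2) * t) =
        (α + 1) * (1 - t) * ((α + 5) / 6) *
          (α * w ^ 2 + (α ^ 2 + 5 * α + 12) * w * t + (α + 2) * (α + 6) * t ^ 2) := by
    simp only [jacobiP, genBinom, sum_range_succ, prod_range_succ, sum_range_zero, prod_range_zero,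
      Nat.reduceAdd, Nat.reduceSub, Nat.factorial, hw]
    push_cast
    ring
  have ht1 : 0 < 1 - t := by nlinarith
  have hw0 : 0 < w := by linarith
  rw [jacobiPt_one_lt_jacobiPt_iff (by linarith), factorization]
  positivity

lemma jacobiPt_one_lt_jacobiPt_four (hα : 1 ≤ α) (ht0 : 0 ≤ t) (ht : (α + 3) * t < 1) :
    jacobiPt 1 α 0 (2 * t - 1) < jacobiPt 4 α 0 (2 * t - 1) := by
  obtain ⟨w, hw⟩ : ∃ w, w = 1 - (α + 3) * t := ⟨_, rfl⟩
  have factorization : (α + 1) * jacobiP 4 α 0 (2 * t - 1) +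
      genBinom ((4 : ℕ) + α) 4 * (0 + 1 - (α + 0 + 2) * t) =
        (α + 1) * (1 - t) * ((α + 6) / 24) *
          ((α ^ 2 + 3 * α + 8) * w ^ 3 + (2 * α ^ 3 + 14 * α ^ 2 + 40 * α - 8) * w ^ 2 * t +
            (α + 1) * (α ^ 3 + 11 * α ^ 2 + 44 * α + 16) * w * t ^ 2 +
            (α + 2) * (α + 7) * (α ^ 2 + α + 4) * t ^ 3) := by
    simp only [jacobiP, genBinom, sum_range_succ, prod_range_succ, sum_range_zero, prod_range_zero,
      Nat.reduceAdd, Nat.reduceSub, Nat.factorial, hw]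
    push_cast
    ring
  have ht1 : 0 < 1 - t := by nlinarith
  have hw0 : 0 < w := by linarith
  have hcoeff : 0 < 2 * α ^ 3 + 14 * α ^ 2 + 40 * α - 8 := by
    have : 0 ≤ 2 * α ^ 3 + 14 * α ^ 2 := by positivity
    linarith
  rw [jacobiPt_one_lt_jacobiPt_iff (by linarith), factorization]
  positivity

lemma le_genBinom_natCast_add_of_five_le {n : ℕ} (hn : 5 ≤ n) (hα : 0 ≤ α) :
    (α + 1) * (α + 2) * (α + 3) * (α + 4) * (α + 5) / 120 ≤ genBinom (n + α) n := by
  have hfive : genBinom ((5 : ℕ) + α) 5 =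
      (α + 1) * (α + 2) * (α + 3) * (α + 4) * (α + 5) / 120 := by
    simp only [genBinom, prod_range_succ, prod_range_zero, Nat.factorial]
    push_cast
    ring
  exact hfive ▸ monotone_genBinom_natCast_add hα hn

lemma neg_lt_jacobiP {n : ℕ} (hn : n ≠ 0) (hα : 2 ≤ α) (ht : t ∈ Icc 0 (1 / (α + 3))) :
    -((α + 2) * (α + 4) * (α + 5) / 120) < jacobiP n α 0 (2 * t - 1) := by
  set y := jacobiP n α 0 (2 * t - 1)
  set r := (α + 2) * (α + 4) * (α + 5) / 120
  have hr : 7 / 20 * (α + 2) ≤ r := by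
    have : 42 ≤ (α + 4) * (α + 5) := by nlinarith
    calc 7 / 20 * (α + 2) = (α + 2) * 42 / 120 := by ring
      _ ≤ (α + 2) * ((α + 4) * (α + 5)) / 120 := by gcongr
      _ = r := by ring
  have hr0 : 0 ≤ r := by positivity
  have hr2 : 2 * α + 1 < (α + 2) * r ^ 2 := by
    calc 2 * α + 1 < 4 * (7 / 20 * (α + 2)) ^ 2 := by nlinarith
      _ ≤ (α + 2) * r ^ 2 := by gcongr; linarith
  have hy : (α + 2) * y ^ 2 ≤ 2 * α + 1 := by
    have hbound := jacobiP_sq_le hn (by linarith) ht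
    rwa [div_mul_eq_mul_div, div_le_one (by linarith)] at hbound
  have hyr : y ^ 2 < r ^ 2 := lt_of_mul_lt_mul_left (hy.trans_lt hr2) (by linarith)
  exact (abs_lt_of_sq_lt_sq' hyr hr0).1

lemma jacobiPt_one_lt_jacobiPt_of_five_le {n : ℕ} (hn : 5 ≤ n) (hα : 2 ≤ α) (ht0 : 0 ≤ t)
    (ht : (α + 3) * t < 1) :
    jacobiPt 1 α 0 (2 * t - 1) < jacobiPt n α 0 (2 * t - 1) := by
  set y := jacobiP n α 0 (2 * t - 1)
  set r := (α + 2) * (α + 4) * (α + 5) / 120 with hr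
  have hy : -r < y :=
    neg_lt_jacobiP (by omega) hα ⟨ht0, (le_div_iff₀' (by linarith)).mpr ht.le⟩
  have hB : (α + 1) * (α + 3) * r ≤ genBinom (n + α) n :=
    le_of_eq_of_le (by rw [hr]; ring) (le_genBinom_natCast_add_of_five_le hn (by linarith))
  have hlinear : 1 / (α + 3) ≤ 1 - (α + 2) * t := by
    rw [div_le_iff₀' (by linarith)]
    nlinarith
  have hlead : (α + 1) * r ≤ genBinom (n + α) n * (1 - (α + 2) * t) := by
    calc (α + 1) * r = (α + 1) * (α + 3) * r * (1 / (α + 3)) := by field_simp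
      _ ≤ genBinom (n + α) n * (1 - (α + 2) * t) :=
        mul_le_mul hB hlinear (by positivity) (genBinom_natCast_add_pos (by linarith) n).le
  have hgap : 0 < (α + 1) * (y + r) := mul_pos (by linarith) (by linarith)
  rw [jacobiPt_one_lt_jacobiPt_iff (by linarith)]
  linarith

end DegreeComparison

/-- For `α ≥ 2`, `n ≥ 2` and `-1 < x < -(α+1)/(α+3)`, the normalized Jacobi
polynomials with `β = 0` satisfy `P̃_n^{(α,0)}(x) > P̃₁^{(α,0)}(x)`. -/
theorem jacobiPt_gt_beta_zero (α : ℝ) (hα : 2 ≤ α) (n : ℕ) (hn : 2 ≤ n) (x : ℝ)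
    (hx0 : -1 < x) (hx1 : x < -(α + 1) / (α + 3)) :
    jacobiPt n α 0 x > jacobiPt 1 α 0 x := by
  obtain ⟨t, rfl⟩ : ∃ t, x = 2 * t - 1 := ⟨(x + 1) / 2, by ring⟩
  have ht0 : 0 ≤ t := by linarith
  have ht : (α + 3) * t < 1 := by
    rw [lt_div_iff₀ (by linarith)] at hx1
    linarith
  obtain rfl | rfl | rfl | hn5 : n = 2 ∨ n = 3 ∨ n = 4 ∨ 5 ≤ n := by omega
  · exact jacobiPt_one_lt_jacobiPt_two (by linarith) ht
  · exact jacobiPt_one_lt_jacobiPt_three (by linarith) ht0 ht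
  · exact jacobiPt_one_lt_jacobiPt_four (by linarith) ht0 ht
  · exact jacobiPt_one_lt_jacobiPt_of_five_le hn5 hα ht0 ht
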